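/- arXiv:1010.5144 — 3 statements merged into one kernel-verified Lean document; each statement's English description precedes it below -/
import Mathlib

section
/- Let n₁ and n₂ be integers with n₁ > 2n₂ + 1 ≥ 5. Then pd(P_{n₁}⊙K_{n₂}) = n₂ + 2. -/
/-!
Distances in `P_n ⊙ K_k` have a closed form (`cdist`, `corona_dist`), which both bounds use.

Upper bound (`pd_upper`): take the two end vertices of the path as singleton cells, and `k` further
cells indexed by the vertices of `K_k`, the inner path vertices being added to one of them. The
distances to the two ends determine the position on the path and tell path vertices from copy
vertices; the cell separates the vertices of one copy.

Lower bound (`pd_lower`): suppose there are at most `k + 1` cells. Vertices of one copy of `K_k` are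
twins, so they lie in distinct cells, and each copy meets all cells but at most one. Say that
position `i` misses the cell `m` if neither the `i`-th path vertex `uᵢ` nor the `i`-th copy meets
`m`. Then a vertex of the `i`-th copy has representation `0` at its own cell, `d(uᵢ, m) + 1` at `m`
and `1` elsewhere, and `uᵢ` has `0` at its own cell, `d(uᵢ, m)` at `m` and `1` elsewhere. Comparing
these, distinct positions `i`, `j` missing the same `m` satisfy `|d(uᵢ, m) - d(uⱼ, m)| ≥ 2`. If
`d(uᵢ, m) ≥ 3`, a neighbouring position also misses `m`, at a distance differing by at most one,
which is impossible; so `d(uᵢ, m) ∈ {1, 2}`, and each cell is missed by at most one position. At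
most one position misses no cell, since the copy vertices over such positions have representation
`0` at their own cell and `1` elsewhere, and two copies share a cell. Hence `n ≤ (k + 1) + 1`,
contradicting `n > 2k + 1`.
-/

open SimpleGraph

/-- The corona product `G ⊙ H`: one copy of `G`, one copy of `H` for each vertex of `G`,
with the `i`-th vertex of `G` joined to every vertex of the `i`-th copy of `H`. -/
def corona {α β : Type*} (G : SimpleGraph α) (H : SimpleGraph β) :
    SimpleGraph (α ⊕ α × β) :=
  SimpleGraph.fromRel (fun x y =>
    match x, y with
    | Sum.inl a, Sum.inl b => G.Adj a b
    | Sum.inl a, Sum.inr iu => a = iu.1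
    | Sum.inr iu, Sum.inr jw => iu.1 = jw.1 ∧ H.Adj iu.2 jw.2
    | _, _ => False)

/-- The distance from a vertex to a set of vertices: `d(v,A) = min_{u ∈ A} d(v,u)`. -/
noncomputable def setDist {α : Type*} (G : SimpleGraph α) (v : α) (A : Set α) : ℕ :=
  sInf (G.dist v '' A)

/-- `S` is a resolving set for `G`: distinct vertices have distinct metric representations. -/
def IsResolvingSet {α : Type*} (G : SimpleGraph α) (S : Set α) : Prop :=
  ∀ u v : α, (∀ w ∈ S, G.dist u w = G.dist v w) → u = v

/-- The metric dimension of `G`: minimum cardinality of a resolving set. -/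
noncomputable def metricDim {α : Type*} (G : SimpleGraph α) : ℕ :=
  sInf {k | ∃ S : Set α, IsResolvingSet G S ∧ S.ncard = k}

/-- A family of sets is a resolving partition for `G` if it is a partition of the vertex set
into nonempty cells and distinct vertices have distinct partition representations. -/
def IsResolvingPartition {α : Type*} (G : SimpleGraph α) (P : Set (Set α)) : Prop :=
  (∀ A ∈ P, A.Nonempty) ∧ (∀ v : α, ∃! A : Set α, A ∈ P ∧ v ∈ A) ∧
    ∀ u v : α, (∀ A ∈ P, setDist G u A = setDist G v A) → u = v

/-- The partition dimension of `G`: minimum number of cells in a resolving partition. -/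
noncomputable def partitionDim {α : Type*} (G : SimpleGraph α) : ℕ :=
  sInf {t | ∃ P : Set (Set α), IsResolvingPartition G P ∧ P.ncard = t}

/-- `c(H)`: the maximum cardinality of a connected component of `H` which is isomorphic to a
complete graph (i.e. whose vertex set is a clique). -/
noncomputable def maxCompleteComp {β : Type*} (H : SimpleGraph β) : ℕ :=
  sSup {k | ∃ C : H.ConnectedComponent, H.IsClique C.supp ∧ C.supp.ncard = k}

/-- `β(H)`: the number of isolated vertices of `H`. -/
noncomputable def numIsolated {β : Type*} (H : SimpleGraph β) : ℕ :=
  Set.ncard {v : β | ∀ u, ¬ H.Adj v u}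

/-- `α(H)`: the number of connected components of `H` of order greater than one. -/
noncomputable def numBigComp {β : Type*} (H : SimpleGraph β) : ℕ :=
  Set.ncard {C : H.ConnectedComponent | 1 < C.supp.ncard}

/-- The closed formula for distances in `P_n ⊙ K_k`. -/
def cdist {n k : ℕ} : Fin n ⊕ Fin n × Fin k → Fin n ⊕ Fin n × Fin k → ℕ
  | Sum.inl i, Sum.inl j => (i.1 - j.1) + (j.1 - i.1)
  | Sum.inl i, Sum.inr q => (i.1 - q.1.1) + (q.1.1 - i.1) + 1
  | Sum.inr p, Sum.inl j => (p.1.1 - j.1) + (j.1 - p.1.1) + 1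
  | Sum.inr p, Sum.inr q =>
      if p.1 = q.1 then (if p.2 = q.2 then 0 else 1)
      else (p.1.1 - q.1.1) + (q.1.1 - p.1.1) + 2

/-- A function that vanishes only on the diagonal, grows by at most one along each edge and can
always be decreased along some edge is the graph distance. -/
lemma dist_eq_of_potential {V : Type*} (G : SimpleGraph V) (F : V → V → ℕ)
    (h0 : ∀ x, F x x = 0) (h0' : ∀ x y, F x y = 0 → x = y)
    (hlip : ∀ x y z, G.Adj y z → F x z ≤ F x y + 1)
    (hdec : ∀ x y k, F x y = k + 1 → ∃ z, G.Adj z y ∧ F x z = k) :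
    G.Preconnected ∧ ∀ x y, G.dist x y = F x y := by
  have hw : ∀ k x y, F x y = k → ∃ p : G.Walk x y, p.length = k := by
    intro k
    induction k with
    | zero =>
      intro x y h
      obtain rfl := h0' x y h
      exact ⟨Walk.nil, rfl⟩
    | succ k ih =>
      intro x y h
      obtain ⟨z, hz, hk⟩ := hdec x y k h
      obtain ⟨p, hp⟩ := ih x z hk
      exact ⟨p.concat hz, by simp [hp]⟩
  have hle : ∀ x y (p : G.Walk y x), F x y ≤ F x x + p.length := by
    intro x y p
    induction p with
    | nil => simp
    | cons h p ih =>
      have := fun x => hlip x _ _ h.symm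
      simp only [Walk.length_cons]
      exact (this _).trans (by omega)
  have hc : G.Preconnected := fun x y => by
    obtain ⟨p, -⟩ := hw _ x y rfl
    exact ⟨p⟩
  refine ⟨hc, fun x y => le_antisymm ?_ ?_⟩
  · obtain ⟨p, hp⟩ := hw _ x y rfl
    exact hp ▸ dist_le p
  · obtain ⟨p, hp⟩ := (hc x y).exists_walk_length_eq_dist
    have := hle x y p.reverse
    rw [h0, Walk.length_reverse] at this
    omega

lemma corona_adj_inl_inl {n k : ℕ} (i j : Fin n) :
    (corona (pathGraph n) (⊤ : SimpleGraph (Fin k))).Adj (Sum.inl i) (Sum.inl j) ↔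
      i.1 + 1 = j.1 ∨ j.1 + 1 = i.1 := by
  simp only [corona, fromRel_adj, pathGraph_adj, ne_eq, Sum.inl.injEq, Fin.ext_iff]
  omega

lemma corona_adj_inl_inr {n k : ℕ} (i : Fin n) (q : Fin n × Fin k) :
    (corona (pathGraph n) (⊤ : SimpleGraph (Fin k))).Adj (Sum.inl i) (Sum.inr q) ↔
      i = q.1 := by
  simp [corona, fromRel_adj]

lemma corona_adj_inr_inr {n k : ℕ} (p q : Fin n × Fin k) :
    (corona (pathGraph n) (⊤ : SimpleGraph (Fin k))).Adj (Sum.inr p) (Sum.inr q) ↔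
      p.1 = q.1 ∧ p.2 ≠ q.2 := by
  rcases p with ⟨i, a⟩
  rcases q with ⟨j, b⟩
  simp only [corona, fromRel_adj, top_adj, ne_eq, Sum.inr.injEq, Prod.mk.injEq]
  grind

lemma corona_dist {n k : ℕ} :
    (corona (pathGraph n) (⊤ : SimpleGraph (Fin k))).Preconnected ∧ ∀ x y,
      (corona (pathGraph n) (⊤ : SimpleGraph (Fin k))).dist x y = cdist x y := by
  apply dist_eq_of_potential
  · rintro (i | ⟨i, a⟩) <;> simp [cdist]
  · rintro (i | ⟨i, a⟩) (j | ⟨j, b⟩) h <;> simp only [cdist] at h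
    · simp only [Sum.inl.injEq, Fin.ext_iff]; omega
    · omega
    · omega
    · grind
  · rintro x (i | ⟨i, a⟩) (j | ⟨j, b⟩) h
    · rw [corona_adj_inl_inl] at h
      rcases x with (l | ⟨l, c⟩) <;> simp only [cdist] <;> omega
    · rw [corona_adj_inl_inr] at h
      rcases x with (l | ⟨l, c⟩) <;> simp only [cdist] <;> grind
    · rw [adj_comm, corona_adj_inl_inr] at h
      rcases x with (l | ⟨l, c⟩) <;> simp only [cdist] <;> grind
    · rw [corona_adj_inr_inr] at h
      rcases x with (l | ⟨l, c⟩) <;> simp only [cdist] <;> grind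
  · -- the last vertex before `inl j` on the way from a vertex over position `l ≠ j`
    have hstep : ∀ l j : Fin n, l ≠ j → ∃ z : Fin n, (z.1 + 1 = j.1 ∨ j.1 + 1 = z.1) ∧
        (l.1 - z.1) + (z.1 - l.1) + 1 = (l.1 - j.1) + (j.1 - l.1) := by
      intro l j hlj
      have hlj' : l.1 ≠ j.1 := fun h => hlj (Fin.ext h)
      rcases lt_or_gt_of_ne hlj' with h | h
      · exact ⟨⟨j.1 - 1, by omega⟩, by simp only; omega, by simp only; omega⟩
      · exact ⟨⟨j.1 + 1, by omega⟩, by simp, by simp only; omega⟩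
    rintro x (j | ⟨j, b⟩) m h
    · rcases x with (l | ⟨l, c⟩) <;> simp only [cdist] at h
      · obtain ⟨z, hz, hd⟩ := hstep l j (by rintro rfl; omega)
        exact ⟨Sum.inl z, by rw [corona_adj_inl_inl]; omega, by simp only [cdist]; omega⟩
      · by_cases hlj : l = j
        · subst hlj
          refine ⟨Sum.inr (l, c), ?_, by simp only [cdist]; simp; omega⟩
          rw [adj_comm, corona_adj_inl_inr]
        · obtain ⟨z, hz, hd⟩ := hstep l j hlj
          exact ⟨Sum.inl z, by rw [corona_adj_inl_inl]; omega, by simp only [cdist]; omega⟩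
    · rcases x with (l | ⟨l, c⟩) <;> simp only [cdist] at h
      · exact ⟨Sum.inl j, by rw [corona_adj_inl_inr], by simp only [cdist]; omega⟩
      · by_cases hlj : l = j
        · subst hlj
          by_cases hcb : c = b
          · simp [hcb] at h
          · refine ⟨Sum.inr (l, c), by rw [corona_adj_inr_inr]; exact ⟨rfl, hcb⟩, ?_⟩
            simp [hcb] at h
            simp [cdist, h]
        · refine ⟨Sum.inl j, by rw [corona_adj_inl_inr], ?_⟩
          simp only [if_neg hlj] at h
          simp only [cdist]; omega

lemma setDist_le {V : Type*} (G : SimpleGraph V) (v w : V) {A : Set V} (h : w ∈ A) :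
    setDist G v A ≤ G.dist v w := Nat.sInf_le ⟨w, h, rfl⟩

lemma exists_setDist {V : Type*} (G : SimpleGraph V) (v : V) {A : Set V} (h : A.Nonempty) :
    ∃ w ∈ A, G.dist v w = setDist G v A := Nat.sInf_mem (h.image _)

lemma setDist_eq_zero {V : Type*} {G : SimpleGraph V} (hG : G.Preconnected) (v : V) {A : Set V}
    (h : A.Nonempty) : setDist G v A = 0 ↔ v ∈ A := by
  constructor
  · intro h0
    obtain ⟨w, hw, hd⟩ := exists_setDist G v h
    rw [h0, (hG v w).dist_eq_zero_iff] at hd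
    exact hd ▸ hw
  · intro hv
    have := setDist_le G v v hv
    rw [dist_self] at this
    omega

lemma setDist_eq_one {V : Type*} {G : SimpleGraph V} (hG : G.Preconnected) {v w : V} {A : Set V}
    (hv : v ∉ A) (hw : w ∈ A) (h : G.Adj v w) : setDist G v A = 1 := by
  have h1 := setDist_le G v w hw
  rw [dist_eq_one_iff_adj.2 h] at h1
  have := (setDist_eq_zero hG v ⟨w, hw⟩).not.2 hv
  omega

lemma setDist_singleton {V : Type*} (G : SimpleGraph V) (v w : V) :
    setDist G v {w} = G.dist v w := by
  simp [setDist]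

lemma setDist_adj_le {V : Type*} {G : SimpleGraph V} (hG : G.Connected) {v w : V} {A : Set V}
    (hA : A.Nonempty) (h : G.Adj v w) : setDist G v A ≤ setDist G w A + 1 := by
  obtain ⟨x, hx, hd⟩ := exists_setDist G w hA
  have h1 := setDist_le G v x hx
  have h2 := hG.dist_triangle (u := v) (v := w) (w := x)
  rw [dist_eq_one_iff_adj.2 h] at h2
  omega

/-- The cells are the fibres of a colouring with colours `Option (Option (Fin k))`: `none` and
`some none` are taken only by the two ends of the path. -/
lemma pd_upper (n k : ℕ) (hn : 2 ≤ n) (hk : 2 ≤ k) :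
    ∃ P, IsResolvingPartition (corona (pathGraph n) (⊤ : SimpleGraph (Fin k))) P ∧
      P.ncard = k + 2 := by
  obtain ⟨hG, hd⟩ := corona_dist (n := n) (k := k)
  set G := corona (pathGraph n) (⊤ : SimpleGraph (Fin k)) with hGdef
  let c : Fin n ⊕ Fin n × Fin k → Option (Option (Fin k)) := fun x => match x with
    | Sum.inl i => if i.1 = 0 then none else if i.1 = n - 1 then some none
        else some (some ⟨0, by omega⟩)
    | Sum.inr p => some (some p.2)
  have hsurj : Function.Surjective c := by
    rintro (_ | _ | a)
    · exact ⟨Sum.inl ⟨0, by omega⟩, by simp [c]⟩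
    · exact ⟨Sum.inl ⟨n - 1, by omega⟩, by simp [c]; omega⟩
    · exact ⟨Sum.inr (⟨0, by omega⟩, a), by simp [c]⟩
  have hS0 : c ⁻¹' {none} = {Sum.inl ⟨0, by omega⟩} := by
    ext (i | p)
    · simp only [c, Set.mem_preimage, Set.mem_singleton_iff, Sum.inl.injEq, Fin.ext_iff]
      grind
    · simp [c]
  have hS1 : c ⁻¹' {some none} = {Sum.inl ⟨n - 1, by omega⟩} := by
    ext (i | p)
    · simp only [c, Set.mem_preimage, Set.mem_singleton_iff, Sum.inl.injEq, Fin.ext_iff]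
      grind
    · simp [c]
  refine ⟨Set.range fun a => c ⁻¹' {a}, ⟨?_, ?_, ?_⟩, ?_⟩
  · rintro _ ⟨a, rfl⟩
    obtain ⟨x, hx⟩ := hsurj a
    exact ⟨x, hx⟩
  · intro v
    refine ⟨c ⁻¹' {c v}, ⟨⟨_, rfl⟩, rfl⟩, ?_⟩
    rintro _ ⟨⟨a, rfl⟩, hv⟩
    have hv' : c v = a := hv
    rw [hv']
  · intro u v h
    have hc : c u = c v := by
      have h1 := h _ ⟨c u, rfl⟩
      have hu : u ∈ c ⁻¹' {c u} := rfl
      rw [(setDist_eq_zero hG u ⟨u, hu⟩).2 hu, eq_comm, setDist_eq_zero hG v ⟨u, hu⟩] at h1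
      exact h1.symm
    have e0 := h _ ⟨none, rfl⟩
    have e1 := h _ ⟨some none, rfl⟩
    simp only [hS0, hS1, setDist_singleton, hd] at e0 e1
    rcases u with (i | ⟨i, a⟩) <;> rcases v with (j | ⟨j, b⟩) <;> simp only [cdist] at e0 e1
    · simp only [Sum.inl.injEq, Fin.ext_iff]; omega
    · omega
    · omega
    · simp only [c, Option.some.injEq] at hc
      simp only [Sum.inr.injEq, Prod.mk.injEq, hc, and_true, Fin.ext_iff]; omega
  · have hinj : Function.Injective fun a => c ⁻¹' {a} :=
      (Set.preimage_injective.2 hsurj).comp Set.singleton_injective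
    rw [← Set.image_univ, Set.ncard_image_of_injective _ hinj, Set.ncard_univ]
    simp

/-- A resolving partition has at least `k + 2` cells. It is given by a labelling `c` of the vertices
whose fibres are the cells `S a`. -/
lemma pd_lower (n k : ℕ) (hn : 2 * k + 1 < n) (hk : 2 ≤ k) {C : Type*} [Fintype C]
    (c : Fin n ⊕ Fin n × Fin k → C) (S : C → Set (Fin n ⊕ Fin n × Fin k))
    (hS : ∀ v a, v ∈ S a ↔ c v = a) (hne : ∀ a, (S a).Nonempty)
    (hres : ∀ u v, (∀ a, setDist (corona (pathGraph n) (⊤ : SimpleGraph (Fin k))) u (S a) =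
      setDist (corona (pathGraph n) (⊤ : SimpleGraph (Fin k))) v (S a)) → u = v) :
    k + 2 ≤ Fintype.card C := by
  classical
  by_contra hcard
  obtain ⟨hG, hd⟩ := corona_dist (n := n) (k := k)
  have hinl := corona_adj_inl_inl (n := n) (k := k)
  have hinr := corona_adj_inl_inr (n := n) (k := k)
  have hrr := corona_adj_inr_inr (n := n) (k := k)
  set G := corona (pathGraph n) (⊤ : SimpleGraph (Fin k)) with hGdef
  have : Nonempty (Fin n ⊕ Fin n × Fin k) := ⟨Sum.inl ⟨0, by omega⟩⟩
  have hGc : G.Connected := ⟨hG⟩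
  have hzero : ∀ v, setDist G v (S (c v)) = 0 := fun v =>
    (setDist_eq_zero hG v (hne _)).2 ((hS _ _).2 rfl)
  have hone : ∀ v w, G.Adj v w → c v ≠ c w → setDist G v (S (c w)) = 1 := fun v w h hvw =>
    setDist_eq_one hG (fun h' => hvw ((hS _ _).1 h')) ((hS _ _).2 rfl) h
  -- vertices of one copy of `K_k` are twins, so sharing a cell would give equal representations
  have htwin : ∀ i, Function.Injective fun a : Fin k => c (Sum.inr (i, a)) := by
    intro i a b hab
    have hab' : c (Sum.inr (i, a)) = c (Sum.inr (i, b)) := hab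
    have := hres (Sum.inr (i, a)) (Sum.inr (i, b)) (fun s => by
      by_cases hs : c (Sum.inr (i, a)) = s
      · subst hs
        rw [hzero, hab', hzero]
      · refine congrArg sInf (Set.image_congr fun w hw => ?_)
        have hw' := (hS _ _).1 hw
        rw [hd, hd]
        rcases w with (j | ⟨j, d⟩) <;> simp only [cdist]
        have h1 : i = j → a ≠ d := by rintro rfl rfl; exact hs hw'
        have h2 : i = j → b ≠ d := by rintro rfl rfl; exact hs (hab'.trans hw')
        grind)
    simpa using this
  -- neither the `i`-th path vertex nor the `i`-th copy meets the cell `m`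
  let miss : Fin n → C → Prop := fun i m => c (Sum.inl i) ≠ m ∧ ∀ a, c (Sum.inr (i, a)) ≠ m
  -- a copy missing `m` meets every other cell: it has `k` cells, and at most `k` cells differ from `m`
  have hall : ∀ i m, miss i m → ∀ s, s ≠ m → ∃ a, c (Sum.inr (i, a)) = s := by
    intro i m hm s hs
    have hsub : Finset.univ.image (fun a : Fin k => c (Sum.inr (i, a))) ⊆
        Finset.univ.erase m := by
      intro x hx
      obtain ⟨a, -, rfl⟩ := Finset.mem_image.1 hx
      exact Finset.mem_erase.2 ⟨hm.2 a, Finset.mem_univ _⟩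
    have heq := Finset.eq_of_subset_of_card_le hsub (by
      rw [Finset.card_image_of_injective _ (htwin i), Finset.card_erase_of_mem
        (Finset.mem_univ _), Finset.card_univ, Finset.card_univ, Fintype.card_fin]
      omega)
    have : s ∈ Finset.univ.image (fun a : Fin k => c (Sum.inr (i, a))) := by
      rw [heq]; exact Finset.mem_erase.2 ⟨hs, Finset.mem_univ _⟩
    obtain ⟨a, -, ha⟩ := Finset.mem_image.1 this
    exact ⟨a, ha⟩
  have hrepm : ∀ i m, miss i m → ∀ a,
      setDist G (Sum.inr (i, a)) (S m) = setDist G (Sum.inl i) (S m) + 1 := by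
    intro i m hm a
    have key : ∀ w ∈ S m, G.dist (Sum.inr (i, a)) w = G.dist (Sum.inl i) w + 1 := by
      intro w hw
      have hw' := (hS _ _).1 hw
      rw [hd, hd]
      rcases w with (j | ⟨j, d⟩) <;> simp only [cdist]
      have h1 : i ≠ j := by rintro rfl; exact hm.2 _ hw'
      rw [if_neg h1]
    obtain ⟨w, hw, h1⟩ := exists_setDist G (Sum.inr (i, a)) (hne m)
    obtain ⟨w', hw', h2⟩ := exists_setDist G (Sum.inl i) (hne m)
    have h3 := setDist_le G (Sum.inr (i, a)) w' hw'
    have h4 := setDist_le G (Sum.inl i) w hw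
    rw [key _ hw] at h1
    rw [key _ hw'] at h3
    omega
  have hrep1 : ∀ i m, miss i m → ∀ a s, s ≠ m → s ≠ c (Sum.inr (i, a)) →
      setDist G (Sum.inr (i, a)) (S s) = 1 := by
    intro i m hm a s hs hsa
    obtain ⟨b, rfl⟩ := hall i m hm s hs
    exact hone _ _ ((hrr _ _).2 ⟨rfl, by rintro rfl; exact hsa rfl⟩) hsa.symm
  have hrepu : ∀ i m, miss i m → ∀ s, s ≠ m → s ≠ c (Sum.inl i) →
      setDist G (Sum.inl i) (S s) = 1 := by
    intro i m hm s hs hsa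
    obtain ⟨b, rfl⟩ := hall i m hm s hs
    exact hone _ _ ((hinr _ _).2 rfl) hsa.symm
  -- otherwise vertices of the two copies lying in a common cell have equal representations
  have hD0 : ∀ i j m, i ≠ j → miss i m → miss j m →
      setDist G (Sum.inl i) (S m) ≠ setDist G (Sum.inl j) (S m) := by
    intro i j m hij hi hj he
    obtain ⟨b, hb⟩ := hall j m hj (c (Sum.inr (i, ⟨0, by omega⟩))) (hi.2 _)
    have := hres (Sum.inr (i, ⟨0, by omega⟩)) (Sum.inr (j, b)) (fun s => by
      by_cases hsm : s = m
      · rw [hsm, hrepm i m hi, hrepm j m hj, he]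
      · by_cases hsc : s = c (Sum.inr (j, b))
        · rw [hsc, hzero, hb, hzero]
        · rw [hrep1 j m hj _ s hsm hsc, hrep1 i m hi _ s hsm (hb ▸ hsc)])
    simp [hij] at this
  -- otherwise `inl j` and the vertex of the `i`-th copy in its cell have equal representations
  have hD1 : ∀ i j m, miss i m → miss j m →
      setDist G (Sum.inl j) (S m) ≠ setDist G (Sum.inl i) (S m) + 1 := by
    intro i j m hi hj he
    obtain ⟨b, hb⟩ := hall i m hi (c (Sum.inl j)) hj.1
    have := hres (Sum.inr (i, b)) (Sum.inl j) (fun s => by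
      by_cases hsm : s = m
      · rw [hsm, hrepm i m hi, he]
      · by_cases hsc : s = c (Sum.inl j)
        · rw [hsc, hzero, ← hb, hzero]
        · rw [hrepu j m hj s hsm hsc, hrep1 i m hi _ s hsm (hb ▸ hsc)])
    simp at this
  -- otherwise the position next to `i` also misses `m`, at a distance differing by at most one
  have hDle : ∀ i m, miss i m → setDist G (Sum.inl i) (S m) ≤ 2 := by
    intro i m hi
    by_contra hgt
    obtain ⟨j, hj⟩ : ∃ j : Fin n, i.1 + 1 = j.1 ∨ j.1 + 1 = i.1 := by
      by_cases h : i.1 = 0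
      · exact ⟨⟨1, by omega⟩, by simp only; omega⟩
      · exact ⟨⟨i.1 - 1, by omega⟩, by simp only; omega⟩
    have hadj := (hinl i j).2 hj
    have hjm : miss j m := by
      constructor
      · intro h
        have := setDist_le G (Sum.inl i) (Sum.inl j) ((hS _ _).2 h)
        rw [hd] at this
        simp only [cdist] at this
        omega
      · intro a h
        have := setDist_le G (Sum.inl i) (Sum.inr (j, a)) ((hS _ _).2 h)
        rw [hd] at this
        simp only [cdist] at this
        omega
    have h1 := setDist_adj_le hGc (hne m) hadj
    have h2 := setDist_adj_le hGc (hne m) hadj.symm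
    have h3 := hD0 i j m (by rintro rfl; omega) hi hjm
    have h4 := hD1 i j m hi hjm
    have h5 := hD1 j i m hjm hi
    omega
  have hDpos : ∀ i m, miss i m → 1 ≤ setDist G (Sum.inl i) (S m) := by
    intro i m hi
    have := (setDist_eq_zero hG (Sum.inl i) (hne m)).not.2 (fun h => hi.1 ((hS _ _).1 h))
    omega
  have huniq : ∀ i j m, miss i m → miss j m → i = j := by
    intro i j m hi hj
    by_contra hij
    have h3 := hD0 i j m hij hi hj
    have h4 := hD1 i j m hi hj
    have h5 := hD1 j i m hj hi
    have := hDle i m hi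
    have := hDle j m hj
    have := hDpos i m hi
    have := hDpos j m hj
    omega
  have hfull : ∀ i, (¬ ∃ m, miss i m) → ∀ a s, s ≠ c (Sum.inr (i, a)) →
      setDist G (Sum.inr (i, a)) (S s) = 1 := by
    intro i hi a s hs
    by_cases h : c (Sum.inl i) = s
    · subst h
      exact hone _ _ ((hinr i (i, a)).2 rfl).symm hs.symm
    · obtain ⟨b, rfl⟩ : ∃ b, c (Sum.inr (i, b)) = s := by
        by_contra hb
        exact hi ⟨s, h, fun b hb' => hb ⟨b, hb'⟩⟩
      exact hone _ _ ((hrr _ _).2 ⟨rfl, by rintro rfl; exact hs rfl⟩) hs.symm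
  have hfulluniq : ∀ i j, (¬ ∃ m, miss i m) → (¬ ∃ m, miss j m) → i = j := by
    intro i j hi hj
    -- two copies share a cell, since `2k > k + 1`
    obtain ⟨a, b, hab⟩ : ∃ a b, c (Sum.inr (i, a)) = c (Sum.inr (j, b)) := by
      by_contra hno
      have hinj : Function.Injective (Sum.elim (fun a : Fin k => c (Sum.inr (i, a)))
          (fun a : Fin k => c (Sum.inr (j, a)))) :=
        (htwin i).sumElim (htwin j) (fun a b h => hno ⟨a, b, h⟩)
      have := Fintype.card_le_of_injective _ hinj
      simp at this
      omega
    have := hres (Sum.inr (i, a)) (Sum.inr (j, b)) (fun s => by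
      by_cases hs : s = c (Sum.inr (j, b))
      · rw [hs, hzero, ← hab, hzero]
      · rw [hfull j hj b s hs, hfull i hi a s (hab ▸ hs)])
    simp at this
    exact this.1
  let g : Fin n → Option C := fun i => if h : ∃ m, miss i m then some h.choose else none
  have hginj : Function.Injective g := by
    intro i j hij
    by_cases hi : ∃ m, miss i m <;> by_cases hj : ∃ m, miss j m
    · simp only [g, dif_pos hi, dif_pos hj, Option.some.injEq] at hij
      exact huniq i j _ hi.choose_spec (hij ▸ hj.choose_spec)
    · simp [g, dif_pos hi, dif_neg hj] at hij
    · simp [g, dif_neg hi, dif_pos hj] at hij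
    · exact hfulluniq i j hi hj
  have := Fintype.card_le_of_injective g hginj
  simp at this
  omega

/-- If `n₁ > 2n₂ + 1 ≥ 5`, then `pd(P_{n₁}⊙K_{n₂}) = n₂ + 2`. -/
theorem stmt11 (n₁ n₂ : ℕ) (h₁ : n₁ > 2 * n₂ + 1) (h₂ : 2 * n₂ + 1 ≥ 5) :
    partitionDim (corona (pathGraph n₁) (⊤ : SimpleGraph (Fin n₂))) = n₂ + 2 := by
  have hup := pd_upper n₁ n₂ (by omega) (by omega)
  refine le_antisymm (Nat.sInf_le hup) (le_csInf ⟨_, hup⟩ ?_)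
  rintro t ⟨P, ⟨hne, huniq, hres⟩, rfl⟩
  choose c hc hc' using huniq
  have : Fintype P := Fintype.ofFinite P
  rw [← Nat.card_coe_set_eq, Nat.card_eq_fintype_card]
  refine pd_lower n₁ n₂ h₁ (by omega) (fun v => (⟨c v, (hc v).1⟩ : P)) (fun a => a.1) ?_
    (fun a => hne _ a.2) (fun u v h => hres u v fun A hA => h ⟨A, hA⟩)
  intro v a
  refine ⟨fun h => Subtype.ext (hc' v a.1 ⟨a.2, h⟩).symm, ?_⟩
  rintro rfl
  exact (hc v).2
end

section
/- Let G=(V,E) be a connected graph of order n ≥ 2 and let H be a graph of order at least two, and let H_i=(V_i,E_i) be the subgraph of G⊙H corresponding to the i-th copy of H. If S is a resolving set for G⊙H, then V_i ∩ S ≠ ∅ for every i ∈ {1,...,n}. -/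
/-!
Every vertex of the `i`-th copy of `H` has the same distance to any vertex `x` outside that copy,
since a path from the copy to `x` has to leave the copy through the `i`-th vertex of `G`, which is
adjacent to the whole copy (`corona_dist_eq_of_not_mem_copy`). Hence if `S` missed the `i`-th copy,
two distinct vertices of the copy would have the same metric representation.
-/

open SimpleGraph

/-- A walk leaving the `i`-th copy of `H` can be made to start at any other vertex `u'` of that copy
without becoming longer: its exit step goes to `inl i`, a common neighbour of the whole copy. -/
lemma corona_exists_walk_le {V W : Type*} (G : SimpleGraph V) (H : SimpleGraph W) (i : V)
    (u' : W) {a x : V ⊕ V × W} (p : (corona G H).Walk a x)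
    (ha : ∃ u, a = Sum.inr (i, u)) (hx : ∀ w, x ≠ Sum.inr (i, w)) :
    ∃ q : (corona G H).Walk (Sum.inr (i, u')) x, q.length ≤ p.length := by
  induction p with
  | nil =>
    obtain ⟨u, rfl⟩ := ha
    exact absurd rfl (hx u)
  | @cons a y x h p ih =>
    obtain ⟨u, rfl⟩ := ha
    rcases y with j | ⟨j, w⟩
    · have hj : j = i := by simpa [corona] using h
      subst hj
      have h' : (corona G H).Adj (Sum.inr (j, u')) (Sum.inl j) := by simp [corona]
      exact ⟨Walk.cons h' p, by simp⟩
    · have hj : j = i := by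
        simp only [corona, SimpleGraph.fromRel_adj] at h
        rcases h.2 with h | h
        · exact h.1.symm
        · exact h.1
      subst hj
      obtain ⟨q, hq⟩ := ih ⟨w, rfl⟩ hx
      exact ⟨q, hq.trans (by simp)⟩

lemma corona_dist_eq_of_not_mem_copy {V W : Type*} (G : SimpleGraph V) (H : SimpleGraph W) (i : V)
    (u u' : W) {x : V ⊕ V × W} (hx : ∀ w, x ≠ Sum.inr (i, w)) :
    (corona G H).dist (Sum.inr (i, u)) x = (corona G H).dist (Sum.inr (i, u')) x := by
  have key : ∀ v v' : W, (corona G H).Reachable (Sum.inr (i, v)) x →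
      (corona G H).Reachable (Sum.inr (i, v')) x ∧
      (corona G H).dist (Sum.inr (i, v')) x ≤ (corona G H).dist (Sum.inr (i, v)) x := by
    intro v v' hr
    obtain ⟨p, hp⟩ := hr.exists_walk_length_eq_dist
    obtain ⟨q, hq⟩ := corona_exists_walk_le G H i v' p ⟨v, rfl⟩ hx
    exact ⟨⟨q⟩, (dist_le q).trans (hq.trans hp.le)⟩
  by_cases hr : (corona G H).Reachable (Sum.inr (i, u)) x
  · obtain ⟨hr', hle⟩ := key u u' hr
    exact le_antisymm (key u' u hr').2 hle
  · -- Both distances take the value `0` that `dist` assigns to unreachable pairs.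
    have hr' : ¬ (corona G H).Reachable (Sum.inr (i, u')) x := fun h => hr (key u' u h).1
    rw [dist_eq_zero_of_not_reachable hr, dist_eq_zero_of_not_reachable hr']

/-- Let `G` be a connected graph of order `n ≥ 2` and `H` a graph of order at
least two. If `S` is a resolving set for `G⊙H`, then `V_i ∩ S ≠ ∅` for every `i`, where `V_i`
is the vertex set of the `i`-th copy of `H`. -/
theorem stmt16 {V W : Type*} [Fintype V] [Fintype W] (G : SimpleGraph V) (H : SimpleGraph W)
    (hG : G.Connected) (h₁ : 2 ≤ Fintype.card V) (h₂ : 2 ≤ Fintype.card W)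
    (S : Set (V ⊕ V × W)) (hS : IsResolvingSet (corona G H) S) :
    ∀ i : V, (Set.range (fun w : W => (Sum.inr (i, w) : V ⊕ V × W)) ∩ S).Nonempty := by
  intro i
  by_contra hne
  obtain ⟨u, u', huu'⟩ := Fintype.exists_pair_of_one_lt_card h₂
  have heq := hS (Sum.inr (i, u)) (Sum.inr (i, u')) fun x hx =>
    corona_dist_eq_of_not_mem_copy G H i u u' fun w hw => hne ⟨x, ⟨w, hw.symm⟩, hx⟩
  simp [huu'] at heq
end

section
/- Let G=(V,E) be a connected graph of order n ≥ 2 and let H be a graph of order at least two. If S is a resolving set for G⊙H of minimum cardinality, then V ∩ S = ∅, where V is the vertex set of the copy of G in G⊙H. -/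
/-!
Put `T = S \ V`; it suffices that `T` is still resolving, since then a vertex of `V` in `S` would
contradict the minimality of `S`. Any two vertices of the `i`-th copy of `H` are equidistant from
everything outside that copy, so `S`, and hence `T`, meets every copy (`exists_mem_copy`).

Suppose `u` and `v` have equal distances to all of `T`, let `a ∈ V` and choose `t ∈ T` in the
`a`-th copy of `H`. For a vertex `x` outside that copy, `d(x, t) = d(x, a) + 1`, while every vertex
of the copy is at distance `1` from `a`. Hence `d(u, a) = d(v, a)` unless exactly one of `u`, `v`
lies in the `a`-th copy; this last case is excluded by comparing distances to `t` and to an element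
of `T` in another copy (`not_same_dist_of_mem_copy`). So `u` and `v` have equal distances to all of
`S`, and `u = v`.

The distance formulas in `G ⊙ H` come from explicit walks for the upper bounds, and for the lower
bounds from functions that change by at most one along every edge (`le_add_dist_of_lipschitz`).
-/

open SimpleGraph

section

variable {V W : Type*} {G : SimpleGraph V} {H : SimpleGraph W}

lemma corona_adj_inl_inl_s17 {a b : V} :
    (corona G H).Adj (Sum.inl a) (Sum.inl b) ↔ G.Adj a b := by
  simp only [corona, SimpleGraph.fromRel_adj]
  constructor
  · rintro ⟨_, h | h⟩
    exacts [h, h.symm]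
  · intro h
    exact ⟨fun e => h.ne (Sum.inl.inj e), Or.inl h⟩

lemma corona_adj_inl_inr_s17 {a b : V} {w : W} :
    (corona G H).Adj (Sum.inl a) (Sum.inr (b, w)) ↔ a = b := by
  simp [corona, SimpleGraph.fromRel_adj]

lemma corona_adj_inr_inr_s17 {a b : V} {w x : W}
    (h : (corona G H).Adj (Sum.inr (a, w)) (Sum.inr (b, x))) : a = b := by
  simp only [corona, SimpleGraph.fromRel_adj] at h
  rcases h with ⟨_, h | h⟩
  exacts [h.1, h.1.symm]

lemma le_add_dist_of_lipschitz {α : Type*} {K : SimpleGraph α} (hK : K.Connected) (f : α → ℕ)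
    (hf : ∀ x y, K.Adj x y → f x ≤ f y + 1) (x y : α) : f x ≤ f y + K.dist x y := by
  obtain ⟨p, hp⟩ := hK.exists_walk_length_eq_dist x y
  rw [← hp]
  clear hp
  induction p with
  | nil => simp
  | cons h p ih =>
    have := hf _ _ h
    rw [SimpleGraph.Walk.length_cons]
    omega

/-- The inclusion of `G` into `G ⊙ H`. -/
def coronaInl (G : SimpleGraph V) (H : SimpleGraph W) : G →g corona G H where
  toFun := Sum.inl
  map_rel' h := corona_adj_inl_inl_s17.2 h

lemma corona_connected (hG : G.Connected) : (corona G H).Connected := by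
  obtain ⟨a⟩ := hG.nonempty
  have key : ∀ x, (corona G H).Reachable (Sum.inl a) x := by
    rintro (b | ⟨b, w⟩)
    · exact (hG.preconnected a b).map (coronaInl G H)
    · exact ((hG.preconnected a b).map (coronaInl G H)).trans
        (corona_adj_inl_inr_s17.2 rfl).reachable
  have : Nonempty (V ⊕ V × W) := ⟨Sum.inl a⟩
  exact ⟨fun x y => (key x).symm.trans (key y)⟩

lemma dist_le_of_adj (hG : G.Connected) {a b : V} (c : V) (h : G.Adj a b) :
    G.dist a c ≤ G.dist b c + 1 := by
  have h1 := hG.dist_triangle (u := a) (v := b) (w := c)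
  rw [SimpleGraph.dist_eq_one_iff_adj.2 h] at h1
  omega

lemma corona_dist_inl_inl (hG : G.Connected) (a b : V) :
    (corona G H).dist (Sum.inl a) (Sum.inl b) = G.dist a b := by
  apply le_antisymm
  · obtain ⟨p, hp⟩ := hG.exists_walk_length_eq_dist a b
    have h : (p.map (coronaInl G H)).length = G.dist a b := by
      rw [SimpleGraph.Walk.length_map, hp]
    exact h ▸ SimpleGraph.dist_le _
  · -- the potential is the distance in `G` between the projections to `G`
    have h := le_add_dist_of_lipschitz (corona_connected (H := H) hG)
      (Sum.elim (fun c => G.dist c b) (fun c => G.dist c.1 b)) (by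
        rintro (c | ⟨c, w⟩) (d | ⟨d, x⟩) h
        · exact dist_le_of_adj hG b (corona_adj_inl_inl_s17.1 h)
        · simp [corona_adj_inl_inr_s17.1 h]
        · simp [corona_adj_inl_inr_s17.1 h.symm]
        · simp [corona_adj_inr_inr_s17 h]) (Sum.inl a) (Sum.inl b)
    simpa using h

lemma corona_dist_inl_self_inr (a : V) (w : W) :
    (corona G H).dist (Sum.inl a) (Sum.inr (a, w)) = 1 :=
  SimpleGraph.dist_eq_one_iff_adj.2 (corona_adj_inl_inr_s17.2 rfl)

open Classical in
/-- A lower bound for the distance to a vertex of the `b`-th copy of `H`. On the `b`-th copy itself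
the bound is `0`, which makes it independent of the chosen vertex of that copy. -/
lemma corona_le_dist_inr (hG : G.Connected) (b : V) (w : W) (x : V ⊕ V × W) :
    Sum.elim (fun c => G.dist c b + 1) (fun c => if c.1 = b then 0 else G.dist c.1 b + 2) x ≤
      (corona G H).dist x (Sum.inr (b, w)) := by
  have h := le_add_dist_of_lipschitz (corona_connected (H := H) hG)
      (Sum.elim (fun c => G.dist c b + 1) (fun c => if c.1 = b then 0 else G.dist c.1 b + 2)) (by
        rintro (c | ⟨c, w⟩) (d | ⟨d, x⟩) h
        · have := dist_le_of_adj hG b (corona_adj_inl_inl_s17.1 h)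
          simp only [Sum.elim_inl]
          omega
        · obtain rfl := corona_adj_inl_inr_s17.1 h
          by_cases hc : c = b
          · simp [hc]
          · simp only [Sum.elim_inl, Sum.elim_inr, if_neg hc]
            omega
        · obtain rfl := corona_adj_inl_inr_s17.1 h.symm
          simp only [Sum.elim_inl, Sum.elim_inr]
          split_ifs <;> omega
        · obtain rfl := corona_adj_inr_inr_s17 h
          simp) x (Sum.inr (b, w))
  simpa using h

lemma corona_dist_inl_inr (hG : G.Connected) (a b : V) (w : W) :
    (corona G H).dist (Sum.inl a) (Sum.inr (b, w)) = G.dist a b + 1 := by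
  apply le_antisymm
  · have h := (corona_connected (H := H) hG).dist_triangle (u := Sum.inl a) (v := Sum.inl b)
      (w := Sum.inr (b, w))
    rwa [corona_dist_inl_inl hG, corona_dist_inl_self_inr] at h
  · simpa using corona_le_dist_inr (H := H) hG b w (Sum.inl a)

lemma corona_dist_inr_inl (hG : G.Connected) (a b : V) (w : W) :
    (corona G H).dist (Sum.inr (b, w)) (Sum.inl a) = G.dist b a + 1 := by
  rw [SimpleGraph.dist_comm, corona_dist_inl_inr hG, SimpleGraph.dist_comm]

lemma corona_dist_inr_inr_le (hG : G.Connected) (a b : V) (w x : W) :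
    (corona G H).dist (Sum.inr (a, w)) (Sum.inr (b, x)) ≤ G.dist a b + 2 := by
  have h := (corona_connected (H := H) hG).dist_triangle (u := Sum.inr (a, w)) (v := Sum.inl a)
    (w := Sum.inr (b, x))
  rw [corona_dist_inr_inl hG, corona_dist_inl_inr hG, SimpleGraph.dist_self] at h
  omega

lemma corona_dist_inr_inr (hG : G.Connected) {a b : V} (hab : a ≠ b) (w x : W) :
    (corona G H).dist (Sum.inr (a, w)) (Sum.inr (b, x)) = G.dist a b + 2 := by
  apply le_antisymm (corona_dist_inr_inr_le hG a b w x)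
  simpa [hab] using corona_le_dist_inr (H := H) hG b x (Sum.inr (a, w))

lemma exists_mem_copy [Nontrivial W] (hG : G.Connected) {S : Set (V ⊕ V × W)}
    (hS : IsResolvingSet (corona G H) S) (i : V) : ∃ w, Sum.inr (i, w) ∈ S := by
  by_contra! hno
  obtain ⟨x, y, hxy⟩ := exists_pair_ne W
  have h := hS (Sum.inr (i, x)) (Sum.inr (i, y)) (by
    rintro (a | ⟨a, w⟩) hs
    · rw [corona_dist_inr_inl hG, corona_dist_inr_inl hG]
    · have hia : i ≠ a := by
        rintro rfl
        exact hno w hs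
      rw [corona_dist_inr_inr hG hia, corona_dist_inr_inr hG hia])
  simp_all

/-- If `S` meets every copy of `H`, then its vertices in the copies of `H` distinguish a vertex of
the `a`-th copy from every vertex outside that copy. -/
lemma not_same_dist_of_mem_copy [Nontrivial V] (hG : G.Connected) {S : Set (V ⊕ V × W)}
    (hS : ∀ i, ∃ w, Sum.inr (i, w) ∈ S) (a : V) (x : W) (v : V ⊕ V × W)
    (hv : ∀ y, v ≠ Sum.inr (a, y))
    (h : ∀ b w, Sum.inr (b, w) ∈ S → (corona G H).dist (Sum.inr (a, x)) (Sum.inr (b, w)) =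
      (corona G H).dist v (Sum.inr (b, w))) : False := by
  rcases v with b | ⟨b, y⟩
  · by_cases hab : a = b
    · -- from any other copy, the vertex `a` of `G` is one step closer than its own copy of `H`
      subst hab
      obtain ⟨c, hc⟩ := exists_ne a
      obtain ⟨w, hw⟩ := hS c
      have := h c w hw
      rw [corona_dist_inr_inr hG hc.symm, corona_dist_inl_inr hG] at this
      omega
    · obtain ⟨w, hw⟩ := hS b
      have := h b w hw
      rw [corona_dist_inr_inr hG hab, corona_dist_inl_inr hG, SimpleGraph.dist_self] at this
      omega
  · have hab : b ≠ a := by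
      rintro rfl
      exact hv y rfl
    obtain ⟨w, hw⟩ := hS a
    have h1 := h a w hw
    have h2 := corona_dist_inr_inr_le (H := H) hG a a x w
    have h3 := hG.pos_dist_of_ne hab
    rw [corona_dist_inr_inr hG hab] at h1
    rw [SimpleGraph.dist_self] at h2
    omega

lemma corona_dist_inr_of_notMem_copy (hG : G.Connected) {u : V ⊕ V × W} {a : V}
    (hu : ∀ y, u ≠ Sum.inr (a, y)) (w : W) :
    (corona G H).dist u (Sum.inr (a, w)) = (corona G H).dist u (Sum.inl a) + 1 := by
  rcases u with b | ⟨b, y⟩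
  · rw [corona_dist_inl_inr hG, corona_dist_inl_inl hG]
  · have hab : b ≠ a := by
      rintro rfl
      exact hu y rfl
    rw [corona_dist_inr_inr hG hab, corona_dist_inr_inl hG]

lemma isResolvingSet_diff_range_inl [Nontrivial V] [Nontrivial W] (hG : G.Connected)
    {S : Set (V ⊕ V × W)} (hS : IsResolvingSet (corona G H) S) :
    IsResolvingSet (corona G H) (S \ Set.range Sum.inl) := by
  intro u v huv
  have hmeet := exists_mem_copy hG hS
  have h : ∀ b w, Sum.inr (b, w) ∈ S → (corona G H).dist u (Sum.inr (b, w)) =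
      (corona G H).dist v (Sum.inr (b, w)) := fun b w hw => huv _ ⟨hw, by simp⟩
  apply hS
  rintro (a | ⟨a, w⟩) hs
  · by_cases hu : ∃ x, u = Sum.inr (a, x)
    · obtain ⟨x, rfl⟩ := hu
      by_cases hv : ∃ y, v = Sum.inr (a, y)
      · obtain ⟨y, rfl⟩ := hv
        rw [corona_dist_inr_inl hG, corona_dist_inr_inl hG]
      · push Not at hv
        exact (not_same_dist_of_mem_copy hG hmeet a x v hv h).elim
    · push Not at hu
      by_cases hv : ∃ y, v = Sum.inr (a, y)
      · obtain ⟨y, rfl⟩ := hv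
        exact (not_same_dist_of_mem_copy hG hmeet a y u hu fun b w hw => (h b w hw).symm).elim
      · push Not at hv
        obtain ⟨w, hw⟩ := hmeet a
        have := h a w hw
        rw [corona_dist_inr_of_notMem_copy hG hu, corona_dist_inr_of_notMem_copy hG hv] at this
        omega
  · exact h a w hs

end

/-- Let `G` be a connected graph of order `n ≥ 2` and `H` a graph of order at
least two. If `S` is a resolving set for `G⊙H` of minimum cardinality, then `S` contains no
vertex of the copy of `G` in `G⊙H`. -/
theorem stmt17 {V W : Type*} [Fintype V] [Fintype W] (G : SimpleGraph V) (H : SimpleGraph W)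
    (hG : G.Connected) (h₁ : 2 ≤ Fintype.card V) (h₂ : 2 ≤ Fintype.card W)
    (S : Set (V ⊕ V × W)) (hS : IsResolvingSet (corona G H) S)
    (hmin : S.ncard = metricDim (corona G H)) :
    ∀ a : V, (Sum.inl a : V ⊕ V × W) ∉ S := by
  intro a ha
  have : Nontrivial V := Fintype.one_lt_card_iff_nontrivial.1 h₁
  have : Nontrivial W := Fintype.one_lt_card_iff_nontrivial.1 h₂
  have hle : metricDim (corona G H) ≤ (S \ Set.range Sum.inl).ncard :=
    Nat.sInf_le ⟨_, isResolvingSet_diff_range_inl hG hS, rfl⟩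
  have hlt : (S \ Set.range Sum.inl).ncard < S.ncard :=
    Set.ncard_lt_ncard
      ⟨Set.sdiff_subset, fun hsub => (hsub ha).2 ⟨a, rfl⟩⟩ (Set.toFinite S)
  omega
end
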